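/- arXiv:2103.03152 — 2 statements merged into one kernel-verified Lean document; each statement's English description precedes it below -/
import Mathlib

section
/- Let a be a G-stable ideal of A. Suppose that for all additive subgroups X, Y of A that are each generated by finitely many elements, XY ⊆ a implies that there exists n ≥ 1 with ⟨X^n⟩_G · ⟨Y⟩_G ⊆ a, where ⟨Z⟩_G denotes the G-stable additive subgroup of A generated by Z. If rad_G(a) is a G-prime of A, then rad(a) is a prime ideal of A. -/
/-!
Primality of `rad(a)` need only be tested on products `x * y ∈ a`, after replacing `x` and `y` by
powers. For such a product, the hypothesis applied to the cyclic groups generated by `x` and `y`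
gives `n` such that the `G`-orbits of `x ^ n` and `y` multiply into `a ⊆ rad_G(a)`. As `rad_G(a)` is
`G`-prime, it contains `x ^ n` or `y`, and `rad_G(a) ⊆ rad(a)`.
-/

open Pointwise

/-- An ideal of `A` is `G`-stable if it is preserved by the action of every `g : G`. -/
def IsGStableIdeal (G : Type*) {A : Type*} [Group G] [CommRing A] [MulSemiringAction G A]
    (I : Ideal A) : Prop :=
  ∀ g : G, ∀ x ∈ I, g • x ∈ I

/-- A `G`-prime of `A` is a proper `G`-stable ideal `p` such that for all `G`-stable ideals
`a`, `b`, `a * b ⊆ p` implies `a ⊆ p` or `b ⊆ p`. -/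
def IsGPrime (G : Type*) {A : Type*} [Group G] [CommRing A] [MulSemiringAction G A]
    (p : Ideal A) : Prop :=
  p ≠ ⊤ ∧ IsGStableIdeal G p ∧
    ∀ a b : Ideal A, IsGStableIdeal G a → IsGStableIdeal G b → a * b ≤ p → a ≤ p ∨ b ≤ p

/-- The `G`-radical of a `G`-stable ideal `a`: the sum of all `G`-stable ideals `c`
with `c ^ n ⊆ a` for some `n ≥ 1`. -/
def gRadical (G : Type*) {A : Type*} [Group G] [CommRing A] [MulSemiringAction G A]
    (a : Ideal A) : Ideal A :=
  sSup {c : Ideal A | IsGStableIdeal G c ∧ ∃ n ≥ 1, c ^ n ≤ a}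

/-- The `n`-fold product `X ^ n` of an additive subgroup of a ring, for `n ≥ 1`.
(The value at `n = 0` is a junk value, never used below.) -/
def sgPow {A : Type*} [CommRing A] (X : AddSubgroup A) : ℕ → AddSubgroup A
  | 0 => ⊥
  | 1 => X
  | (n + 2) => sgPow X (n + 1) * X

/-- The `G`-stable additive subgroup of `A` generated by a set `s`. -/
def gOrbitClosure (G : Type*) {A : Type*} [Group G] [CommRing A] [MulSemiringAction G A]
    (s : Set A) : AddSubgroup A :=
  AddSubgroup.closure (⋃ g : G, (g • ·) '' s)

section AddSubgroup

variable {R : Type*} [NonUnitalNonAssocRing R]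

lemma addSubgroup_mul_mem_mul {X Y : AddSubgroup R} {x y : R} (hx : x ∈ X) (hy : y ∈ Y) :
    x * y ∈ X * Y :=
  AddSubmonoid.mul_mem_mul (M := X.toAddSubmonoid) (N := Y.toAddSubmonoid) hx hy

lemma addSubgroup_closure_mul_closure_le {s t : Set R} {Z : AddSubgroup R}
    (h : ∀ x ∈ s, ∀ y ∈ t, x * y ∈ Z) :
    AddSubgroup.closure s * AddSubgroup.closure t ≤ Z := by
  have mul_closure_mem : ∀ x ∈ s, ∀ y ∈ AddSubgroup.closure t, x * y ∈ Z := fun x hx =>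
    (AddSubgroup.closure_le (Z.comap (AddMonoidHom.mulLeft x))).2 (h x hx)
  refine AddSubmonoid.mul_le (P := Z.toAddSubmonoid).2 fun x hx y hy => ?_
  exact (AddSubgroup.closure_le (Z.comap (AddMonoidHom.mulRight y))).2
    (fun z hz => mul_closure_mem z hz y hy) hx

end AddSubgroup

lemma radical_isPrime_of_mul_mem {R : Type*} [CommSemiring R] {I : Ideal R} (hI : I ≠ ⊤)
    (h : ∀ x y, x * y ∈ I → x ∈ I.radical ∨ y ∈ I.radical) : I.radical.IsPrime := by
  refine ⟨mt Ideal.radical_eq_top.1 hI, ?_⟩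
  rintro x y ⟨m, hm⟩
  exact (h (x ^ m) (y ^ m) (mul_pow x y m ▸ hm)).imp
    Ideal.mem_radical_of_pow_mem Ideal.mem_radical_of_pow_mem

lemma pow_mem_sgPow {A : Type*} [CommRing A] {X : AddSubgroup A} {x : A} (hx : x ∈ X) :
    ∀ n ≥ 1, x ^ n ∈ sgPow X n
  | 1, _ => by rwa [pow_one]
  | n + 2, _ => by
    rw [pow_succ]
    exact addSubgroup_mul_mem_mul (pow_mem_sgPow hx (n + 1) n.succ_pos) hx

section GStable

variable {G A : Type*} [Group G] [CommRing A] [MulSemiringAction G A]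

lemma smul_mem_gOrbitClosure {s : Set A} {x : A} (hx : x ∈ s) (g : G) :
    g • x ∈ gOrbitClosure G s :=
  AddSubgroup.subset_closure (Set.mem_iUnion.2 ⟨g, x, hx, rfl⟩)

lemma subset_gOrbitClosure (s : Set A) : s ⊆ gOrbitClosure G s := fun x hx =>
  one_smul G x ▸ smul_mem_gOrbitClosure hx (1 : G)

lemma isGStableIdeal_span {s : Set A} (hs : ∀ g : G, ∀ x ∈ s, g • x ∈ s) :
    IsGStableIdeal G (Ideal.span s) := fun g =>
  Ideal.span_le (I := (Ideal.span s).comap (MulSemiringAction.toRingHom G A g)).2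
    fun x hx => Ideal.subset_span (hs g x hx)

lemma isGStableIdeal_span_orbit (x : A) :
    IsGStableIdeal G (Ideal.span (MulAction.orbit G x)) :=
  isGStableIdeal_span fun g _ => MulAction.mem_orbit_of_mem_orbit g

lemma IsGPrime.mem_or_mem_of_mul_smul_mem {p : Ideal A} (hp : IsGPrime G p) {x y : A}
    (h : ∀ g : G, x * g • y ∈ p) : x ∈ p ∨ y ∈ p := by
  obtain ⟨-, hp_stable, hp_mul⟩ := hp
  have span_mul_span_le :
      Ideal.span (MulAction.orbit G x) * Ideal.span (MulAction.orbit G y) ≤ p := by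
    rw [Ideal.span_mul_span', Ideal.span_le]
    rintro _ ⟨_, ⟨g, rfl⟩, _, ⟨k, rfl⟩, rfl⟩
    have hmem := hp_stable g _ (h (g⁻¹ * k))
    rwa [smul_mul', smul_smul, mul_inv_cancel_left] at hmem
  exact (hp_mul _ _ (isGStableIdeal_span_orbit x) (isGStableIdeal_span_orbit y)
    span_mul_span_le).imp
      (fun hx => hx (Ideal.subset_span (MulAction.mem_orbit_self x)))
      (fun hy => hy (Ideal.subset_span (MulAction.mem_orbit_self y)))

lemma le_gRadical {a : Ideal A} (ha : IsGStableIdeal G a) : a ≤ gRadical G a :=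
  le_sSup ⟨ha, 1, le_rfl, (pow_one a).le⟩

lemma gRadical_le_radical (a : Ideal A) : gRadical G a ≤ a.radical := by
  refine sSup_le ?_
  rintro c ⟨-, n, -, hn⟩ x hx
  exact ⟨n, hn (Ideal.pow_mem_pow hx n)⟩

end GStable

/-- Suppose that for all finitely generated additive subgroups `X`, `Y` of `A` with
`XY ⊆ a` there is `n ≥ 1` with `⟨Xⁿ⟩_G ⟨Y⟩_G ⊆ a`.  If `rad_G(a)` is `G`-prime, then
`rad(a)` is prime. -/
theorem radical_isPrime_of_gRadical_isGPrime
    {G A : Type*} [Group G] [CommRing A] [MulSemiringAction G A]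
    (a : Ideal A) (ha : IsGStableIdeal G a)
    (hB1 : ∀ X Y : AddSubgroup A,
      (∃ S : Finset A, X = AddSubgroup.closure (S : Set A)) →
      (∃ T : Finset A, Y = AddSubgroup.closure (T : Set A)) →
      ((X * Y : AddSubgroup A) : Set A) ⊆ (a : Set A) →
      ∃ n ≥ 1,
        ((gOrbitClosure G ((sgPow X n : AddSubgroup A) : Set A) *
            gOrbitClosure G (Y : Set A) : AddSubgroup A) : Set A) ⊆ (a : Set A))
    (hp : IsGPrime G (gRadical G a)) :
    a.radical.IsPrime := by
  have ha_ne_top : a ≠ ⊤ := fun h => hp.1 (top_le_iff.1 (h ▸ le_gRadical ha))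
  refine radical_isPrime_of_mul_mem ha_ne_top fun x y hxy => ?_
  obtain ⟨n, hn, h_sub⟩ := hB1 (AddSubgroup.closure {x}) (AddSubgroup.closure {y})
    ⟨{x}, by rw [Finset.coe_singleton]⟩ ⟨{y}, by rw [Finset.coe_singleton]⟩
    (addSubgroup_closure_mul_closure_le (Z := a.toAddSubgroup) (by rintro _ rfl _ rfl; exact hxy))
  have pow_mul_smul_mem (g : G) : x ^ n * g • y ∈ a :=
    h_sub (addSubgroup_mul_mem_mul
      (subset_gOrbitClosure _ (pow_mem_sgPow (AddSubgroup.mem_closure_singleton_self _) n hn))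
      (smul_mem_gOrbitClosure (AddSubgroup.mem_closure_singleton_self _) g))
  exact (hp.mem_or_mem_of_mul_smul_mem fun g => le_gRadical ha (pow_mul_smul_mem g)).imp
    (fun hx => Ideal.mem_radical_of_pow_mem (gRadical_le_radical a hx))
    (fun hy => gRadical_le_radical a hy)
end

section
/- Let H be a subgroup of G. Suppose that every G-stable additive subgroup of A generated by the G-orbits of finitely many elements is, as an H-stable additive subgroup, generated by the H-orbits of finitely many elements. Then for every G-stable ideal a of A and every G-stable additive subgroup X of A, X ⊆ rad_H(a) implies X ⊆ rad_G(a), where rad_H(a) denotes the sum of all H-stable ideals c of A with c^n ⊆ a for some n ≥ 1. -/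
/-- The `H`-radical, for a subgroup `H` of `G`: the sum of all `H`-stable ideals `c`
with `c ^ n ⊆ a` for some `n ≥ 1`. -/
def hRadical {G : Type*} [Group G] (H : Subgroup G) {A : Type*} [CommRing A]
    [MulSemiringAction G A] (a : Ideal A) : Ideal A :=
  sSup {c : Ideal A | (∀ h : H, ∀ x ∈ c, (h : G) • x ∈ c) ∧ ∃ n ≥ 1, c ^ n ≤ a}

section Span

variable {R M : Type*} [Ring R] [AddCommGroup M] [Module R M]

lemma span_addSubgroup_closure (s : Set M) :
    Submodule.span R (AddSubgroup.closure s : Set M) = Submodule.span R s :=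
  le_antisymm
    (Submodule.span_le.2 <|
      (AddSubgroup.closure_le (Submodule.span R s).toAddSubgroup).2 Submodule.subset_span)
    (Submodule.span_mono AddSubgroup.subset_closure)

lemma span_eq_span_of_addSubgroup_closure_eq {s t : Set M}
    (h : AddSubgroup.closure s = AddSubgroup.closure t) :
    Submodule.span R s = Submodule.span R t := by
  rw [← span_addSubgroup_closure s, h, span_addSubgroup_closure]

end Span

section StableIdeal

variable {G A : Type*} [Group G] [CommRing A] [MulSemiringAction G A] {I J a : Ideal A} {s : Set A}

lemma isGStableIdeal_iff_le_comap :
    IsGStableIdeal G I ↔ ∀ g : G, I ≤ I.comap (MulSemiringAction.toRingHom G A g) :=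
  Iff.rfl

lemma isGStableIdeal_bot : IsGStableIdeal G (⊥ : Ideal A) :=
  isGStableIdeal_iff_le_comap.2 fun _ => bot_le

lemma IsGStableIdeal.sup (hI : IsGStableIdeal G I) (hJ : IsGStableIdeal G J) :
    IsGStableIdeal G (I ⊔ J) :=
  isGStableIdeal_iff_le_comap.2 fun g =>
    sup_le (fun x hx => Ideal.mem_sup_left (hI g x hx)) fun x hx => Ideal.mem_sup_right (hJ g x hx)

variable (G) in
/-- The `G`-stable ideal generated by a set `s`, encoded as the ideal generated by the `G`-orbits
of the elements of `s`. The indexed union is the one used for stable additive subgroups in the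
finiteness hypothesis of the main theorem. -/
def stableSpan (s : Set A) : Ideal A :=
  Ideal.span (⋃ g : G, (g • ·) '' s)

lemma stableSpan_le_iff : stableSpan G s ≤ I ↔ ∀ g : G, ∀ x ∈ s, g • x ∈ I := by
  simp only [stableSpan, Ideal.span_le, Set.iUnion_subset_iff, Set.image_subset_iff]
  rfl

lemma smul_mem_stableSpan (g : G) {x : A} (hx : x ∈ s) : g • x ∈ stableSpan G s :=
  stableSpan_le_iff.1 le_rfl g x hx

variable (G s) in
lemma subset_stableSpan : s ⊆ stableSpan G s := fun x hx =>
  one_smul G x ▸ smul_mem_stableSpan (1 : G) hx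

variable (G s) in
lemma isGStableIdeal_stableSpan : IsGStableIdeal G (stableSpan G s) :=
  isGStableIdeal_iff_le_comap.2 fun g => stableSpan_le_iff.2 fun k x hx => by
    simpa only [mul_smul] using! smul_mem_stableSpan (g * k) hx

variable (G a) in
lemma directedOn_isGStableIdeal_pow_le :
    DirectedOn (· ≤ ·) {c : Ideal A | IsGStableIdeal G c ∧ ∃ n ≥ 1, c ^ n ≤ a} := by
  rintro c ⟨hc, m, hm, hcm⟩ d ⟨hd, n, -, hdn⟩
  exact ⟨c ⊔ d, ⟨hc.sup hd, m + n, Nat.le_add_right_of_le hm,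
    Ideal.sup_pow_add_le_pow_sup_pow.trans (sup_le hcm hdn)⟩, le_sup_left, le_sup_right⟩

lemma exists_isGStableIdeal_of_finset_subset_gRadical {T : Finset A}
    (hT : (T : Set A) ⊆ gRadical G a) :
    ∃ c : Ideal A, (IsGStableIdeal G c ∧ ∃ n ≥ 1, c ^ n ≤ a) ∧ (T : Set A) ⊆ c := by
  have hne : {c : Ideal A | IsGStableIdeal G c ∧ ∃ n ≥ 1, c ^ n ≤ a}.Nonempty :=
    ⟨⊥, isGStableIdeal_bot, 1, le_rfl, by simp⟩
  obtain ⟨c, hc, hTc⟩ := Submodule.finset_span_isCompactElement T _ _ hne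
    (directedOn_isGStableIdeal_pow_le G a) (isLUB_sSup _) (Ideal.span_le.2 hT)
  exact ⟨c, hc, Ideal.span_le.1 hTc⟩

lemma exists_stableSpan_pow_le_of_finset_subset_gRadical {T : Finset A}
    (hT : (T : Set A) ⊆ gRadical G a) : ∃ n ≥ 1, stableSpan G (T : Set A) ^ n ≤ a := by
  obtain ⟨c, ⟨hc, n, hn, hcn⟩, hTc⟩ := exists_isGStableIdeal_of_finset_subset_gRadical hT
  have hle : stableSpan G (T : Set A) ≤ c := stableSpan_le_iff.2 fun g t ht => hc g t (hTc ht)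
  exact ⟨n, hn, (Ideal.pow_right_mono hle n).trans hcn⟩

lemma hRadical_eq_gRadical (H : Subgroup G) (a : Ideal A) : hRadical H a = gRadical H a :=
  rfl

lemma stableSpan_finset_le_gRadical_of_subset_hRadical {H : Subgroup G} {T : Finset A}
    (hG : IsGStableIdeal G (stableSpan H (T : Set A))) (hT : (T : Set A) ⊆ hRadical H a) :
    stableSpan H (T : Set A) ≤ gRadical G a := by
  rw [hRadical_eq_gRadical] at hT
  obtain ⟨n, hn, hpow⟩ := exists_stableSpan_pow_le_of_finset_subset_gRadical hT
  exact le_sSup ⟨hG, n, hn, hpow⟩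

end StableIdeal

theorem gStable_le_gRadical_of_le_hRadical_general
    {G A : Type*} [Group G] [CommRing A] [MulSemiringAction G A] (H : Subgroup G)
    (a : Ideal A) (X : Set A) (hX : ∀ g : G, ∀ x ∈ X, g • x ∈ X)
    (hfin : ∀ S : Finset A, (S : Set A) ⊆ X →
      ∃ T : Finset A, stableSpan G (S : Set A) = stableSpan H (T : Set A))
    (hXrad : X ⊆ (hRadical H a : Set A)) :
    X ⊆ (gRadical G a : Set A) := by
  intro x hx
  have hxX : (({x} : Finset A) : Set A) ⊆ X := by simpa using hx
  obtain ⟨T, hT⟩ := hfin {x} hxX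
  have hG : IsGStableIdeal G (stableSpan H (T : Set A)) :=
    hT ▸ isGStableIdeal_stableSpan G _
  have hrad : stableSpan H (T : Set A) ≤ hRadical H a :=
    hT ▸ stableSpan_le_iff.2 fun g y hy => hXrad (hX g y (hxX hy))
  have hxT : x ∈ stableSpan H (T : Set A) :=
    hT ▸ subset_stableSpan G _ (Finset.mem_coe.2 (Finset.mem_singleton_self x))
  exact stableSpan_finset_le_gRadical_of_subset_hRadical hG
    ((subset_stableSpan H _).trans hrad) hxT

/-- Suppose every `G`-stable additive subgroup of `A` generated by the `G`-orbits of finitely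
many elements is, as an `H`-stable additive subgroup, generated by the `H`-orbits of finitely
many elements.  Then for every `G`-stable ideal `a`, any `G`-stable additive subgroup contained
in `rad_H(a)` is contained in `rad_G(a)`. -/
theorem gStable_le_gRadical_of_le_hRadical
    {G A : Type*} [Group G] [CommRing A] [MulSemiringAction G A] (H : Subgroup G)
    (hfin : ∀ S : Finset A, ∃ T : Finset A,
      AddSubgroup.closure (⋃ g : G, (g • ·) '' (S : Set A)) =
        AddSubgroup.closure (⋃ h : H, ((h : G) • ·) '' (T : Set A)))
    (a : Ideal A) (ha : IsGStableIdeal G a)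
    (X : AddSubgroup A) (hX : ∀ g : G, ∀ x ∈ X, g • x ∈ X)
    (hXrad : (X : Set A) ⊆ (hRadical H a : Set A)) :
    (X : Set A) ⊆ (gRadical G a : Set A) :=
  gStable_le_gRadical_of_le_hRadical_general H a X hX
    (fun S _ => (hfin S).imp fun _ hT => span_eq_span_of_addSubgroup_closure_eq hT) hXrad
end
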